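/- arXiv:1903.09011 — 2 statements merged into one kernel-verified Lean document; each statement's English description precedes it below -/
import Mathlib

section
/- If G is a 3-edge-connected non-planar graph with at least 6 vertices, then G contains an immersion of K_{3,3}. -/
/-- A finite multigraph without loops: vertices `V`, edges `E`,
each edge has an unordered pair of distinct endpoints. -/
structure Multigraph where
  V : Type
  E : Type
  [fV : Fintype V]
  [fE : Fintype E]
  [dV : DecidableEq V]
  [dE : DecidableEq E]
  ends : E → Sym2 V
  noLoop : ∀ e, ¬ (ends e).IsDiag

attribute [instance] Multigraph.fV Multigraph.fE Multigraph.dV Multigraph.dE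

namespace Multigraph

/-- Walks in a multigraph. -/
inductive Walk (G : Multigraph) : G.V → G.V → Type
  | nil (v : G.V) : Walk G v v
  | cons {u v w : G.V} (e : G.E) (h : G.ends e = s(u, v)) (p : Walk G v w) : Walk G u w

/-- The list of edges traversed by a walk. -/
def Walk.edges {G : Multigraph} : {u v : G.V} → G.Walk u v → List G.E
  | _, _, .nil _ => []
  | _, _, .cons e _ p => e :: p.edges

/-- The list of vertices visited by a walk. -/
def Walk.support {G : Multigraph} : {u v : G.V} → G.Walk u v → List G.V
  | u, _, .nil _ => [u]
  | u, _, .cons _ _ p => u :: p.support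

/-- A walk is a path if it visits no vertex twice. -/
def Walk.IsPath {G : Multigraph} {u v : G.V} (p : G.Walk u v) : Prop := p.support.Nodup

/-- Data of an immersion of `H` into `G`: an injective map on vertices and,
for each edge of `H`, a path in `G` joining the images of its endpoints,
the paths being pairwise edge-disjoint. -/
structure ImmersionData (H G : Multigraph) where
  vmap : H.V → G.V
  inj : Function.Injective vmap
  pstart : H.E → G.V
  pend : H.E → G.V
  walk : ∀ e, G.Walk (pstart e) (pend e)
  ends_eq : ∀ e, s(pstart e, pend e) = (H.ends e).map vmap
  isPath : ∀ e, (walk e).IsPath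
  edgeDisj : ∀ e e', e ≠ e' → List.Disjoint (walk e).edges (walk e').edges

/-- `H` immerses in `G`. -/
def Immerses (H G : Multigraph) : Prop := Nonempty (ImmersionData H G)

/-- Data witnessing that `G` contains a subdivision of `H` as a subgraph
(i.e. `H` is a topological minor of `G`): as an immersion, but moreover the
paths may only meet at images of common endpoints. -/
structure SubdivisionData (H G : Multigraph) extends ImmersionData H G where
  vtxDisj : ∀ e e', e ≠ e' → ∀ x, x ∈ (walk e).support → x ∈ (walk e').support →
    ∃ w, x = vmap w ∧ w ∈ H.ends e ∧ w ∈ H.ends e'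

/-- `G` contains a subdivision of `H` as a subgraph. -/
def ContainsSubdivision (H G : Multigraph) : Prop := Nonempty (SubdivisionData H G)

/-- The complete bipartite graph `K_{3,3}`. -/
def K33 : Multigraph where
  V := Fin 3 ⊕ Fin 3
  E := Fin 3 × Fin 3
  ends e := s(Sum.inl e.1, Sum.inr e.2)
  noLoop e := by simp [Sym2.mk_isDiag_iff]

/-- The complete graph `K_5`. -/
def K5 : Multigraph where
  V := Fin 5
  E := {p : Fin 5 × Fin 5 // p.1 < p.2}
  ends e := s(e.1.1, e.1.2)
  noLoop e := by simpa [Sym2.mk_isDiag_iff] using e.2.ne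

variable (G : Multigraph)

/-- The degree of a vertex: the number of incident edges. -/
def deg (v : G.V) : ℕ := (Finset.univ.filter fun e => v ∈ G.ends e).card

/-- The multiplicity of the (possible) edge between `u` and `v`. -/
def mult (u v : G.V) : ℕ := (Finset.univ.filter fun e => G.ends e = s(u, v)).card

/-- The edge cut determined by a set `A` of vertices. -/
def cut (A : Finset G.V) : Finset G.E :=
  Finset.univ.filter fun e => ∃ u ∈ A, ∃ v ∈ Aᶜ, G.ends e = s(u, v)

/-- Every edge cut of `G` has at least `k` edges. -/
def EdgeConnGe (k : ℕ) : Prop :=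
  ∀ A : Finset G.V, A.Nonempty → A ≠ Finset.univ → k ≤ (G.cut A).card

/-- Internally 4-edge-connected: 3-edge-connected and every 3-edge cut has a
side consisting of a single vertex. -/
def Internally4EC : Prop :=
  G.EdgeConnGe 3 ∧ ∀ A : Finset G.V, A.Nonempty → A ≠ Finset.univ →
    (G.cut A).card = 3 → A.card = 1 ∨ Aᶜ.card = 1

/-- Weakly 5-edge-connected: internally 4-edge-connected and every 4-edge cut
has a side with at most two vertices. -/
def Weakly5EC : Prop :=
  G.Internally4EC ∧ ∀ A : Finset G.V, A.Nonempty → A ≠ Finset.univ →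
    (G.cut A).card = 4 → A.card ≤ 2 ∨ Aᶜ.card ≤ 2

/-- `G` is `d`-regular. -/
def IsRegular (d : ℕ) : Prop := ∀ v, G.deg v = d

/-- `G` is connected. -/
def Connected : Prop := ∀ u v : G.V, Nonempty (G.Walk u v)

/-- `v` is a cut-vertex: the remaining vertices split into two nonempty parts
with no edge between them. -/
def IsCutVertex (v : G.V) : Prop :=
  ∃ C D : Finset G.V, C.Nonempty ∧ D.Nonempty ∧ Disjoint C D ∧ v ∉ C ∧ v ∉ D ∧
    (∀ x : G.V, x ∈ C ∪ D ∨ x = v) ∧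
    ∀ e : G.E, ¬ ∃ u ∈ C, ∃ w ∈ D, G.ends e = s(u, w)

/-- `G` is 2-connected. -/
def TwoConnected : Prop :=
  G.Connected ∧ 3 ≤ Fintype.card G.V ∧ ∀ v, ¬ G.IsCutVertex v

/-- Planarity, via Kuratowski's characterization: no subdivision of `K_5`
nor of `K_{3,3}` as a subgraph. -/
def Planar : Prop := ¬ ContainsSubdivision K5 G ∧ ¬ ContainsSubdivision K33 G

end Multigraph

/-!
Call an edge of `G` free if no path of the given subdivision of `K₅` uses it.

Suppose that `x` is not a branch vertex and that three edge-disjoint connections lead from `x` to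
branch vertices `a₀`, `a₁`, `a₂`, using only free edges and paths of the subdivision among
`a₀`, `a₁`, `a₂`. Then `x` and the two remaining branch vertices on one side, `a₀`, `a₁`, `a₂` on
the other, immerse `K₃,₃`: the six paths between the remaining branch vertices and the `aᵢ` are
untouched.

If some path `P` of the subdivision has an interior vertex, then a free connection leads from the
interior of `P` to a vertex `w` of the subdivision outside it, because otherwise at most two edges,
the first and the last one of `P`, would leave the set of vertices so reached. If `w` lies on a path
`Q` sharing an end with `P`, then the two parts of `P`, and the free connection followed by a part
of `Q`, are three connections as above. If `w` is interior to a path `Q` disjoint from `P`, then `x`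
and the ends of `Q` against `w` and the ends of `P` immerse `K₃,₃`.

If no path has an interior vertex, then some vertex lies outside the subdivision, and
3-edge-connectedness yields a vertex with three edge-disjoint free connections to branch vertices.
When these end at the same branch vertex, they are continued by edges of the `K₅` to distinct ones.
-/

namespace Multigraph

/-! ### Connection by sets of edges -/

variable {G H : Multigraph}

/-- The simple graph on the vertices of `G` whose adjacencies are realized by the edges in `S`;
connection in `G` by edges of `S` is `(G.restrict S).Reachable`. -/
def restrict (G : Multigraph) (S : Set G.E) : SimpleGraph G.V :=
  SimpleGraph.fromEdgeSet (G.ends '' S)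

theorem restrict_mono {S T : Set G.E} (h : S ⊆ T) : G.restrict S ≤ G.restrict T :=
  SimpleGraph.fromEdgeSet_mono (Set.image_mono h)

theorem restrict_adj {S : Set G.E} {u v : G.V} :
    (G.restrict S).Adj u v ↔ ∃ e ∈ S, G.ends e = s(u, v) := by
  rw [restrict, SimpleGraph.fromEdgeSet_adj]
  refine ⟨And.left, fun ⟨e, he, hends⟩ => ⟨⟨e, he, hends⟩, ?_⟩⟩
  rintro rfl
  exact G.noLoop e (by simp [hends])

theorem reachable_of_ends {S : Set G.E} {u v : G.V} {e : G.E} (he : e ∈ S)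
    (hends : G.ends e = s(u, v)) : (G.restrict S).Reachable u v :=
  (restrict_adj.2 ⟨e, he, hends⟩).reachable

theorem exists_reachable_of_mem {S : Set G.E} {u v : G.V} (h : (G.restrict S).Reachable u v)
    {W : Set G.V} (hv : v ∈ W) :
    ∃ x ∈ W, (G.restrict {e ∈ S | ¬ ∀ y ∈ G.ends e, y ∈ W}).Reachable u x := by
  obtain ⟨p⟩ := h
  induction p with
  | nil => exact ⟨_, hv, .rfl⟩
  | @cons u _ _ hadj _ ih =>
    by_cases hu : u ∈ W
    · exact ⟨u, hu, .rfl⟩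
    · obtain ⟨x, hx, hr⟩ := ih hv
      obtain ⟨e, he, hends⟩ := restrict_adj.1 hadj
      have hleave : e ∈ {e ∈ S | ¬ ∀ y ∈ G.ends e, y ∈ W} :=
        ⟨he, fun h => hu (h u (by simp [hends]))⟩
      exact ⟨x, hx, (reachable_of_ends hleave hends).trans hr⟩

namespace Walk

/-- The edges of a walk, as a set. -/
def edgeSet {u v : G.V} (p : G.Walk u v) : Set G.E := {e | e ∈ p.edges}

theorem mem_edgeSet {u v : G.V} {p : G.Walk u v} {e : G.E} : e ∈ p.edgeSet ↔ e ∈ p.edges :=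
  Iff.rfl

theorem reachable {u v : G.V} (p : G.Walk u v) : (G.restrict p.edgeSet).Reachable u v := by
  induction p with
  | nil => exact .rfl
  | cons e h p ih =>
    exact (reachable_of_ends (List.mem_cons_self ..) h).trans
      (ih.mono (restrict_mono fun _ => List.mem_cons_of_mem _))

theorem start_mem_support {u v : G.V} (p : G.Walk u v) : u ∈ p.support := by
  cases p <;> simp [support]

theorem end_mem_support {u v : G.V} (p : G.Walk u v) : v ∈ p.support := by
  induction p with
  | nil => simp [support]
  | cons _ _ _ ih => simp [support, ih]

theorem mem_support_of_mem_edges {u v : G.V} {p : G.Walk u v} {e : G.E} (he : e ∈ p.edges)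
    {y : G.V} (hy : y ∈ G.ends e) : y ∈ p.support := by
  induction p with
  | nil => simp [edges] at he
  | cons f h p ih =>
    rcases List.mem_cons.1 he with rfl | he
    · rcases Sym2.mem_iff.1 (h ▸ hy) with rfl | rfl
      · exact List.mem_cons_self ..
      · exact List.mem_cons_of_mem _ p.start_mem_support
    · exact List.mem_cons_of_mem _ (ih he)

theorem exists_edges_append_eq {u v x : G.V} (p : G.Walk u v) (hx : x ∈ p.support) :
    ∃ (q : G.Walk u x) (r : G.Walk x v), q.edges ++ r.edges = p.edges := by
  induction p with
  | nil =>
    obtain rfl := List.mem_singleton.1 hx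
    exact ⟨.nil _, .nil _, rfl⟩
  | cons e h p ih =>
    rcases List.mem_cons.1 hx with rfl | hx
    · exact ⟨.nil _, .cons e h p, rfl⟩
    · obtain ⟨q, r, hqr⟩ := ih hx
      exact ⟨.cons e h q, r, congrArg (e :: ·) hqr⟩

theorem isPath_cons {u v w : G.V} {e : G.E} {h : G.ends e = s(u, v)} {p : G.Walk v w} :
    (cons e h p).IsPath ↔ u ∉ p.support ∧ p.IsPath :=
  List.nodup_cons

theorem IsPath.nodup_edges {u v : G.V} {p : G.Walk u v} (hp : p.IsPath) : p.edges.Nodup := by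
  induction p with
  | nil => exact List.nodup_nil
  | cons e h p ih =>
    obtain ⟨hu, hp⟩ := isPath_cons.1 hp
    exact List.nodup_cons.2 ⟨fun he => hu (mem_support_of_mem_edges he (by simp [h])), ih hp⟩

theorem IsPath.exists_split {u v x : G.V} {p : G.Walk u v} (hp : p.IsPath) (hx : x ∈ p.support) :
    ∃ A B : Set G.E, Disjoint A B ∧ A ⊆ p.edgeSet ∧ B ⊆ p.edgeSet ∧
      (G.restrict A).Reachable x u ∧ (G.restrict B).Reachable x v := by
  obtain ⟨q, r, hqr⟩ := p.exists_edges_append_eq hx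
  have hdisj : List.Disjoint q.edges r.edges := List.disjoint_of_nodup_append (hqr ▸ hp.nodup_edges)
  exact ⟨q.edgeSet, r.edgeSet, Set.disjoint_left.2 fun _ => @hdisj _,
    fun _ he => mem_edgeSet.2 (hqr ▸ List.mem_append_left _ he),
    fun _ he => mem_edgeSet.2 (hqr ▸ List.mem_append_right _ he), q.reachable.symm, r.reachable⟩

theorem IsPath.ne_of_mem_edges {u v : G.V} {p : G.Walk u v} (hp : p.IsPath) {e : G.E}
    (he : e ∈ p.edges) : u ≠ v := by
  cases p with
  | nil => simp [edges] at he
  | cons f h p =>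
    rintro rfl
    exact (isPath_cons.1 hp).1 p.end_mem_support

theorem IsPath.edge_start_unique {u v : G.V} {p : G.Walk u v} (hp : p.IsPath) {e e' : G.E}
    (he : e ∈ p.edges) (he' : e' ∈ p.edges) (hu : u ∈ G.ends e) (hu' : u ∈ G.ends e') :
    e = e' := by
  cases p with
  | nil => simp [edges] at he
  | cons f h p =>
    have eq_of_mem {g : G.E} (hg : g ∈ (cons f h p).edges) (hug : u ∈ G.ends g) : g = f :=
      (List.mem_cons.1 hg).resolve_right fun hg =>
        (isPath_cons.1 hp).1 (mem_support_of_mem_edges hg hug)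
    exact (eq_of_mem he hu).trans (eq_of_mem he' hu').symm

theorem IsPath.edge_end_unique {u v : G.V} {p : G.Walk u v} (hp : p.IsPath) {e e' : G.E}
    (he : e ∈ p.edges) (he' : e' ∈ p.edges) (hv : v ∈ G.ends e) (hv' : v ∈ G.ends e') :
    e = e' := by
  induction p with
  | nil => simp [edges] at he
  | @cons a b c f h p ih =>
    obtain ⟨-, hp'⟩ := isPath_cons.1 hp
    have end_notMem {g : G.E} (hg : g ∈ p.edges) : c ∉ G.ends f := by
      rw [h, Sym2.mem_iff]
      exact not_or.2 ⟨(hp.ne_of_mem_edges he).symm, (hp'.ne_of_mem_edges hg).symm⟩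
    rcases List.mem_cons.1 he with rfl | hep <;> rcases List.mem_cons.1 he' with rfl | hep'
    · rfl
    · exact absurd hv (end_notMem hep')
    · exact absurd hv' (end_notMem hep)
    · exact ih hp' hep hep' hv hv'

end Walk

theorem exists_isPath_of_reachable {S : Set G.E} {u v : G.V} (h : (G.restrict S).Reachable u v) :
    ∃ p : G.Walk u v, p.IsPath ∧ p.edgeSet ⊆ S := by
  have lift {a b : G.V} (p : (G.restrict S).Walk a b) :
      ∃ q : G.Walk a b, q.support = p.support ∧ q.edgeSet ⊆ S := by
    induction p with
    | nil => exact ⟨.nil _, rfl, fun e he => absurd he List.not_mem_nil⟩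
    | cons hadj _ ih =>
      obtain ⟨q, hsupp, hq⟩ := ih
      obtain ⟨e, he, hends⟩ := restrict_adj.1 hadj
      refine ⟨.cons e hends q, congrArg _ hsupp, fun f hf => ?_⟩
      rcases List.mem_cons.1 hf with rfl | hf
      exacts [he, hq hf]
  obtain ⟨p, hp⟩ := h.exists_isPath
  obtain ⟨q, hsupp, hq⟩ := lift p
  exact ⟨q, by rw [Walk.IsPath, hsupp]; exact hp.support_nodup, hq⟩

theorem pairwise_vecCons {α : Type*} {r : α → α → Prop} [Std.Symm r] {n : ℕ} {a : α}
    {f : Fin n → α} :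
    Pairwise (Function.onFun r (Matrix.vecCons a f)) ↔
      (∀ i, r a (f i)) ∧ Pairwise (Function.onFun r f) :=
  have : Std.Symm (Function.onFun r (Matrix.vecCons a f)) := ⟨fun _ _ h => symm_of r h⟩
  pairwise_fin_succ_iff_of_isSymm

theorem pairwise_uncurry_vecCons {α ι : Type*} {r : α → α → Prop} [Std.Symm r] {n : ℕ} {B : ι → α}
    {Z : ι → Fin n → α} (hB : Pairwise (Function.onFun r B))
    (hBZ : ∀ i i' j, r (B i) (Z i' j)) (hZ : Pairwise (Function.onFun r (Function.uncurry Z))) :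
    Pairwise (Function.onFun r (Function.uncurry fun i => Matrix.vecCons (B i) (Z i))) := by
  rintro ⟨i, j⟩ ⟨i', j'⟩ hne
  induction j using Fin.cases <;> induction j' using Fin.cases
  · exact hB fun h => hne (congrArg (·, 0) h)
  · exact hBZ ..
  · exact symm (hBZ ..)
  · exact @hZ (_, _) (_, _) fun h => hne (congrArg (Prod.map id Fin.succ) h)

theorem injective_vecCons_three {α : Type*} {i j k : α} (hij : i ≠ j) (hik : i ≠ k) (hjk : j ≠ k) :
    Function.Injective ![i, j, k] := by
  simp [← List.nodup_ofFn, hij, hik, hjk]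

theorem exists_tripod_of_reachable {D : Set G.E} {c : Fin 3 → G.V}
    (h : ∀ i j, (G.restrict D).Reachable (c i) (c j)) :
    ∃ x, ∃ X : Fin 3 → Set G.E, Pairwise (Function.onFun Disjoint X) ∧ (∀ i, X i ⊆ D) ∧
      ∀ i, (G.restrict (X i)).Reachable x (c i) := by
  obtain ⟨p, hp, hpD⟩ := exists_isPath_of_reachable (h 0 1)
  obtain ⟨x, hx, hr⟩ := exists_reachable_of_mem (W := {y | y ∈ p.support}) (h 2 0)
    p.start_mem_support
  obtain ⟨A, B, hAB, hA, hB, hrA, hrB⟩ := hp.exists_split hx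
  set C := {e ∈ D | ¬ ∀ y ∈ G.ends e, y ∈ {y | y ∈ p.support}}
  have hpC : Disjoint p.edgeSet C := Set.disjoint_left.2 fun e he heC =>
    heC.2 fun y hy => Walk.mem_support_of_mem_edges he hy
  refine ⟨x, ![A, B, C], ?_, ?_, ?_⟩
  · simp [pairwise_vecCons, Fin.forall_fin_succ, hAB, hpC.mono_left hA, hpC.mono_left hB,
      Subsingleton.pairwise]
  · simpa [Fin.forall_fin_succ] using ⟨hA.trans hpD, hB.trans hpD, Set.sep_subset ..⟩
  · simpa [Fin.forall_fin_succ] using ⟨hrA, hrB, hr.symm⟩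

/-! ### Edge cuts -/

theorem mem_cut_iff {A : Finset G.V} {e : G.E} :
    e ∈ G.cut A ↔ ∃ u ∈ A, ∃ v ∉ A, G.ends e = s(u, v) := by
  simp [cut]

open Classical in
/-- The vertices connected by edges of `D` to a vertex of `W`. -/
noncomputable def reachFrom (G : Multigraph) (D : Set G.E) (W : Set G.V) : Finset G.V :=
  Finset.univ.filter fun v => ∃ a ∈ W, (G.restrict D).Reachable a v

theorem mem_reachFrom {D : Set G.E} {W : Set G.V} {v : G.V} :
    v ∈ G.reachFrom D W ↔ ∃ a ∈ W, (G.restrict D).Reachable a v := by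
  simp [reachFrom]

theorem subset_reachFrom {D : Set G.E} {W : Set G.V} {a : G.V} (ha : a ∈ W) :
    a ∈ G.reachFrom D W :=
  mem_reachFrom.2 ⟨a, ha, .rfl⟩

theorem notMem_of_mem_cut_reachFrom {D : Set G.E} {W : Set G.V} {e : G.E}
    (he : e ∈ G.cut (G.reachFrom D W)) : e ∉ D := by
  intro heD
  obtain ⟨u, hu, v, hv, hends⟩ := mem_cut_iff.1 he
  obtain ⟨a, ha, hr⟩ := mem_reachFrom.1 hu
  exact hv (mem_reachFrom.2 ⟨a, ha, hr.trans (reachable_of_ends heD hends)⟩)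

theorem reachable_notMem {B : Set G.V} {u v : G.V}
    (h : (G.restrict {e | ∀ y ∈ G.ends e, y ∉ B}).Reachable u v) (hu : u ∉ B) : v ∉ B := by
  obtain ⟨p⟩ := h
  induction p with
  | nil => exact hu
  | cons hadj _ ih =>
    obtain ⟨e, he, hends⟩ := restrict_adj.1 hadj
    exact ih (he _ (by simp [hends]))

theorem EdgeConnGe.exists_tripod (hG : G.EdgeConnGe 3) {B : Set G.V} (hB : B.Nonempty)
    {x₀ : G.V} (hx₀ : x₀ ∉ B) :
    ∃ x ∉ B, ∃ X : Fin 3 → Set G.E, Pairwise (Function.onFun Disjoint X) ∧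
      (∀ i, ∀ e ∈ X i, ∃ y ∈ G.ends e, y ∉ B) ∧
      ∀ i, ∃ b ∈ B, (G.restrict (X i)).Reachable x b := by
  set D : Set G.E := {e | ∀ y ∈ G.ends e, y ∉ B}
  set R := G.reachFrom D {x₀} with hR
  have reach_of_mem {v : G.V} (hv : v ∈ R) : (G.restrict D).Reachable x₀ v := by
    simpa [hR, mem_reachFrom] using hv
  have notMem_of_mem {v : G.V} (hv : v ∈ R) : v ∉ B := reachable_notMem (reach_of_mem hv) hx₀
  have hne : R ≠ Finset.univ := by
    obtain ⟨b, hb⟩ := hB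
    exact fun h => notMem_of_mem (h ▸ Finset.mem_univ b) hb
  have hcard : 3 ≤ (G.cut R).card := hG R ⟨x₀, subset_reachFrom rfl⟩ hne
  obtain ⟨φ⟩ : Nonempty (Fin 3 ↪ G.cut R) :=
    Function.Embedding.nonempty_of_card_le (by simpa using hcard)
  have exists_ends (i : Fin 3) : ∃ u ∈ R, ∃ b ∈ B, G.ends (φ i) = s(u, b) := by
    obtain ⟨u, hu, b, hb, hends⟩ := mem_cut_iff.1 (φ i).2
    refine ⟨u, hu, b, by_contra fun hbB => ?_, hends⟩
    refine notMem_of_mem_cut_reachFrom (φ i).2 fun y hy => ?_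
    rcases Sym2.mem_iff.1 (hends ▸ hy) with rfl | rfl
    exacts [notMem_of_mem hu, hbB]
  choose c hc b hb hends using exists_ends
  obtain ⟨x, X, hXdisj, hXD, hXr⟩ := exists_tripod_of_reachable (D := D) fun i j =>
    (reach_of_mem (hc i)).symm.trans (reach_of_mem (hc j))
  refine ⟨x, ?_, fun i => insert (φ i).1 (X i), fun i j hij => ?_, ?_, fun i => ⟨b i, hb i, ?_⟩⟩
  · exact reachable_notMem (((hXr 0).mono (restrict_mono (hXD 0))).symm) (notMem_of_mem (hc 0))
  · have hφX (i j : Fin 3) : (φ i).1 ∉ X j := fun h =>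
      notMem_of_mem_cut_reachFrom (φ i).2 (hXD j h)
    have hφ : (φ i).1 ≠ (φ j).1 := fun h => hij (φ.injective (Subtype.ext h))
    simp [Function.onFun, Set.disjoint_insert_left, hφ.symm, hφX, hXdisj hij]
  · rintro i e (rfl | he)
    · exact ⟨c i, by simp [hends i], notMem_of_mem (hc i)⟩
    · exact ⟨_, Sym2.out_fst_mem _, hXD i he _ (Sym2.out_fst_mem _)⟩
  · exact ((hXr i).mono (restrict_mono (Set.subset_insert ..))).trans
      (reachable_of_ends (Set.mem_insert ..) (hends i))

/-! ### Immersions and subdivisions -/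

theorem exists_ends_eq (e : G.E) : ∃ a : Fin 2 → G.V, G.ends e = s(a 0, a 1) :=
  ⟨![_, _], (Quot.out_eq (G.ends e)).symm⟩

theorem immerses_of_reachable {φ : H.V → G.V} (hφ : Function.Injective φ) {U : H.E → Set G.E}
    (hU : Pairwise (Function.onFun Disjoint U))
    (hr : ∀ e, ∃ u v, H.ends e = s(u, v) ∧ (G.restrict (U e)).Reachable (φ u) (φ v)) :
    Immerses H G := by
  choose u v hends hr using hr
  choose p hp hpU using fun e => exists_isPath_of_reachable (hr e)
  exact ⟨{
    vmap := φ
    inj := hφ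
    pstart := fun e => φ (u e)
    pend := fun e => φ (v e)
    walk := p
    ends_eq := fun e => by rw [hends, Sym2.map_mk]
    isPath := hp
    edgeDisj := fun e e' hne _ he he' =>
      Set.disjoint_left.1 (hU hne) (hpU e he) (hpU e' he') }⟩

theorem immerses_K33_of_star {x : G.V} {b : Fin 2 → G.V} {c : Fin 3 → G.V}
    (hb : Function.Injective b) (hc : Function.Injective c) (hxb : ∀ i, b i ≠ x)
    (hxc : ∀ j, x ≠ c j) (hbc : ∀ i j, b i ≠ c j)
    {X : Fin 3 → Set G.E} {Y : Fin 2 → Fin 3 → Set G.E}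
    (hX : Pairwise (Function.onFun Disjoint X))
    (hY : Pairwise (Function.onFun Disjoint (Function.uncurry Y)))
    (hXY : ∀ i j k, Disjoint (X k) (Y i j))
    (hxr : ∀ j, (G.restrict (X j)).Reachable x (c j))
    (hbr : ∀ i j, (G.restrict (Y i j)).Reachable (b i) (c j)) : Immerses K33 G := by
  let a : Fin 3 → G.V := Fin.cons x b
  let U : Fin 3 → Fin 3 → Set G.E := Fin.cons X Y
  have ha : Function.Injective a := Fin.cons_injective_iff.2 ⟨by simpa using hxb, hb⟩
  have hac : ∀ i j, a i ≠ c j := Fin.forall_fin_succ.2 ⟨hxc, hbc⟩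
  have hr : ∀ i j, (G.restrict (U i j)).Reachable (a i) (c j) := Fin.forall_fin_succ.2 ⟨hxr, hbr⟩
  refine immerses_of_reachable (H := K33) (ha.sumElim hc hac) (U := Function.uncurry U) ?_
    fun e => ⟨_, _, rfl, hr e.1 e.2⟩
  rintro ⟨i, j⟩ ⟨i', j'⟩ hne
  induction i using Fin.cases <;> induction i' using Fin.cases
  · exact hX (by rintro rfl; exact hne rfl)
  · exact hXY _ _ _
  · exact (hXY _ _ _).symm
  · exact @hY (_, _) (_, _) fun h => hne (congrArg (Prod.map Fin.succ id) h)

namespace ImmersionData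

theorem pstart_pend_eq (S : ImmersionData H G) {f : H.E} {i j : H.V} (hf : H.ends f = s(i, j)) :
    S.pstart f = S.vmap i ∧ S.pend f = S.vmap j ∨ S.pstart f = S.vmap j ∧ S.pend f = S.vmap i := by
  simpa [hf, Sym2.eq_iff] using S.ends_eq f

theorem vmap_mem_support (S : ImmersionData H G) {f : H.E} {i : H.V} (hi : i ∈ H.ends f) :
    S.vmap i ∈ (S.walk f).support := by
  obtain ⟨j, hf⟩ := hi
  rcases S.pstart_pend_eq hf with ⟨h, -⟩ | ⟨-, h⟩
  · exact h ▸ (S.walk f).start_mem_support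
  · exact h ▸ (S.walk f).end_mem_support

theorem edge_at_vmap_unique (S : ImmersionData H G) {f : H.E} {i : H.V} (hi : i ∈ H.ends f)
    {e e' : G.E} (he : e ∈ (S.walk f).edges) (he' : e' ∈ (S.walk f).edges)
    (hv : S.vmap i ∈ G.ends e) (hv' : S.vmap i ∈ G.ends e') : e = e' := by
  obtain ⟨j, hf⟩ := hi
  rcases S.pstart_pend_eq hf with ⟨h, -⟩ | ⟨-, h⟩
  · exact (S.isPath f).edge_start_unique he he' (h ▸ hv) (h ▸ hv')
  · exact (S.isPath f).edge_end_unique he he' (h ▸ hv) (h ▸ hv')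

theorem exists_split (S : ImmersionData H G) {f : H.E} {a : Fin 2 → H.V}
    (hf : H.ends f = s(a 0, a 1)) {x : G.V} (hx : x ∈ (S.walk f).support) :
    ∃ A : Fin 2 → Set G.E, Pairwise (Function.onFun Disjoint A) ∧
      (∀ i, A i ⊆ (S.walk f).edgeSet) ∧ ∀ i, (G.restrict (A i)).Reachable x (S.vmap (a i)) := by
  obtain ⟨A, B, hAB, hA, hB, hrA, hrB⟩ := (S.isPath f).exists_split hx
  rcases S.pstart_pend_eq hf with ⟨h0, h1⟩ | ⟨h1, h0⟩
  · exact ⟨![A, B], by simp [pairwise_vecCons, hAB, Subsingleton.pairwise],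
      Fin.forall_fin_two.2 ⟨hA, hB⟩, Fin.forall_fin_two.2 ⟨h0 ▸ hrA, h1 ▸ hrB⟩⟩
  · exact ⟨![B, A], by simp [pairwise_vecCons, hAB.symm, Subsingleton.pairwise],
      Fin.forall_fin_two.2 ⟨hB, hA⟩, Fin.forall_fin_two.2 ⟨h0 ▸ hrB, h1 ▸ hrA⟩⟩

theorem reachable (S : ImmersionData H G) {f : H.E} {i j : H.V} (hf : H.ends f = s(i, j)) :
    (G.restrict (S.walk f).edgeSet).Reachable (S.vmap i) (S.vmap j) := by
  rcases S.pstart_pend_eq hf with ⟨hi, hj⟩ | ⟨hj, hi⟩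
  · exact hi ▸ hj ▸ (S.walk f).reachable
  · exact hi ▸ hj ▸ (S.walk f).reachable.symm

theorem disjoint_edgeSet (S : ImmersionData H G) {f g : H.E} (hfg : f ≠ g) :
    Disjoint (S.walk f).edgeSet (S.walk g).edgeSet :=
  Set.disjoint_left.2 fun _ hf hg => S.edgeDisj f g hfg hf hg

/-- The edges of `G` that lie on no path of the immersion other than those of edges of `H` with
both ends in `W`. -/
def edgesWithin (S : ImmersionData H G) (W : Set H.V) : Set G.E :=
  {e | ∀ f, e ∈ (S.walk f).edges → ∀ i ∈ H.ends f, i ∈ W}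

/-- The edges of `G` that lie on no path of the immersion. -/
def freeEdges (S : ImmersionData H G) : Set G.E := {e | ∀ f, e ∉ (S.walk f).edges}

theorem freeEdges_subset_edgesWithin (S : ImmersionData H G) (W : Set H.V) :
    S.freeEdges ⊆ S.edgesWithin W :=
  fun _ he f hf => absurd hf (he f)

theorem edgeSet_subset_edgesWithin (S : ImmersionData H G) {W : Set H.V} {f : H.E}
    (hf : ∀ i ∈ H.ends f, i ∈ W) : (S.walk f).edgeSet ⊆ S.edgesWithin W := by
  intro e he g heg
  obtain rfl : f = g := by_contra fun hfg => S.edgeDisj f g hfg he heg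
  exact hf

theorem disjoint_freeEdges_edgeSet (S : ImmersionData H G) (f : H.E) :
    Disjoint S.freeEdges (S.walk f).edgeSet :=
  Set.disjoint_left.2 fun _ he => he f

/-- The vertices of the path of `f` other than its two ends. -/
def interior (S : ImmersionData H G) (f : H.E) : Set G.V :=
  {x | x ∈ (S.walk f).support ∧ ∀ i ∈ H.ends f, x ≠ S.vmap i}

theorem mem_interior_or_eq_vmap (S : ImmersionData H G) {f : H.E} {x : G.V}
    (hx : x ∈ (S.walk f).support) : x ∈ S.interior f ∨ ∃ i ∈ H.ends f, x = S.vmap i := by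
  by_contra! h
  exact h.1 ⟨hx, h.2⟩

theorem card_cut_le_two (S : ImmersionData H G) {f : H.E} {A : Finset G.V}
    (hA : ∀ e ∈ G.cut A, e ∈ (S.walk f).edges ∧ ∃ i ∈ H.ends f, S.vmap i ∈ G.ends e) :
    (G.cut A).card ≤ 2 := by
  obtain ⟨a, hf⟩ := exists_ends_eq f
  let edgesAt (k : H.V) : Finset G.E := (G.cut A).filter fun e => S.vmap k ∈ G.ends e
  have card_edgesAt {k : H.V} (hk : k ∈ H.ends f) : (edgesAt k).card ≤ 1 := by
    refine Finset.card_le_one.2 fun e he e' he' => ?_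
    rw [Finset.mem_filter] at he he'
    exact S.edge_at_vmap_unique hk (hA e he.1).1 (hA e' he'.1).1 he.2 he'.2
  calc (G.cut A).card ≤ (edgesAt (a 0) ∪ edgesAt (a 1)).card := by
        refine Finset.card_le_card fun e he => ?_
        obtain ⟨-, k, hk, hke⟩ := hA e he
        rcases Sym2.mem_iff.1 (hf ▸ hk) with rfl | rfl <;> simp [edgesAt, he, hke]
    _ ≤ (edgesAt (a 0)).card + (edgesAt (a 1)).card := Finset.card_union_le ..
    _ ≤ 1 + 1 := add_le_add (card_edgesAt (by simp [hf])) (card_edgesAt (by simp [hf]))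

end ImmersionData

namespace SubdivisionData

theorem eq_of_mem_interior (S : SubdivisionData H G) {f g : H.E} {x : G.V}
    (hx : x ∈ S.interior f) (hxg : x ∈ (S.walk g).support) : f = g := by
  by_contra hfg
  obtain ⟨i, rfl, hi, -⟩ := S.vtxDisj f g hfg x hx.1 hxg
  exact hx.2 i hi rfl

theorem notMem_range_of_mem_interior (S : SubdivisionData H G) {f : H.E}
    (hH : ∀ i, ∃ g ≠ f, i ∈ H.ends g) {x : G.V} (hx : x ∈ S.interior f) :
    x ∉ Set.range S.vmap := by
  rintro ⟨i, rfl⟩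
  obtain ⟨g, hgf, hi⟩ := hH i
  exact hgf (S.eq_of_mem_interior hx (S.vmap_mem_support hi)).symm

theorem exists_reachable_notMem_interior (S : SubdivisionData H G) (hG : G.EdgeConnGe 3) {f : H.E}
    (hf : (S.interior f).Nonempty) :
    ∃ x ∈ S.interior f, ∃ g, ∃ w ∈ (S.walk g).support, w ∉ S.interior f ∧
      (G.restrict S.freeEdges).Reachable x w := by
  by_contra! hcon
  set R := G.reachFrom S.freeEdges (S.interior f)
  have mem_interior {w : G.V} (hw : w ∈ R) {g : H.E} (hwg : w ∈ (S.walk g).support) :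
      w ∈ S.interior f := by
    obtain ⟨x, hx, hr⟩ := mem_reachFrom.1 hw
    exact by_contra fun hwf => hcon x hx g w hwg hwf hr
  have hcut : ∀ e ∈ G.cut R, e ∈ (S.walk f).edges ∧ ∃ i ∈ H.ends f, S.vmap i ∈ G.ends e := by
    intro e he
    obtain ⟨u, hu, v, hv, hends⟩ := mem_cut_iff.1 he
    obtain ⟨g, heg⟩ : ∃ g, e ∈ (S.walk g).edges := by
      simpa [ImmersionData.freeEdges] using notMem_of_mem_cut_reachFrom he
    have hug : u ∈ (S.walk g).support := Walk.mem_support_of_mem_edges heg (by simp [hends])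
    have hvg : v ∈ (S.walk g).support := Walk.mem_support_of_mem_edges heg (by simp [hends])
    obtain rfl : f = g := S.eq_of_mem_interior (mem_interior hu hug) hug
    obtain ⟨i, hi, rfl⟩ := (S.mem_interior_or_eq_vmap hvg).resolve_left fun h =>
      hv (subset_reachFrom h)
    exact ⟨heg, i, hi, by simp [hends]⟩
  obtain ⟨x, hx⟩ := hf
  have hne : R ≠ Finset.univ := by
    obtain ⟨i, hi⟩ : ∃ i, i ∈ H.ends f := ⟨_, Sym2.out_fst_mem _⟩
    intro h
    exact (mem_interior (h ▸ Finset.mem_univ (S.vmap i)) (S.vmap_mem_support hi)).2 i hi rfl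
  have h3 := hG R ⟨x, subset_reachFrom hx⟩ hne
  have h2 := S.card_cut_le_two hcut
  lia

end SubdivisionData
/-! ### Subdivisions of `K₅` -/

namespace K5

theorem exists_edge {i j : K5.V} (hij : i ≠ j) : ∃ f, K5.ends f = s(i, j) := by
  rcases lt_or_gt_of_ne (α := Fin 5) hij with h | h
  · exact ⟨⟨(i, j), h⟩, rfl⟩
  · exact ⟨⟨(j, i), h⟩, Sym2.eq_swap⟩

theorem ends_injective : Function.Injective K5.ends := by
  rintro ⟨⟨i, j⟩, hij⟩ ⟨⟨i', j'⟩, hij'⟩ h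
  obtain ⟨rfl, rfl⟩ | ⟨rfl, rfl⟩ := Sym2.eq_iff.1 h
  · rfl
  · exact absurd hij hij'.not_gt

theorem ne_of_ends_eq {f : K5.E} {i j : K5.V} (hf : K5.ends f = s(i, j)) : i ≠ j := by
  rintro rfl
  exact K5.noLoop f (by simp [hf])

theorem injective_of_ends_eq {f : K5.E} {a : Fin 2 → K5.V} (hf : K5.ends f = s(a 0, a 1)) :
    Function.Injective a := by
  simpa [Function.Injective, Fin.forall_fin_two, eq_comm] using ne_of_ends_eq hf

theorem exists_ne_mem_ends (f : K5.E) (i : K5.V) : ∃ g ≠ f, i ∈ K5.ends g := by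
  have exists_ne : ∀ (k : Fin 5) (q : Sym2 (Fin 5)), ∃ j, k ≠ j ∧ s(k, j) ≠ q := by decide
  obtain ⟨j, hij, hq⟩ := exists_ne i (K5.ends f)
  obtain ⟨g, hg⟩ := exists_edge hij
  refine ⟨g, ?_, hg ▸ Sym2.mem_mk_left ..⟩
  rintro rfl
  exact hq hg.symm

theorem exists_injective_forall_ne (a : Fin 3 → K5.V) :
    ∃ b : Fin 2 → K5.V, Function.Injective b ∧ ∀ i j, b i ≠ a j := by
  have hcard : (Set.range a).ncard + 2 ≤ Nat.card (Fin 5) := by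
    have := Finite.card_range_le a
    rw [Nat.card_coe_set_eq] at this
    simp only [Nat.card_fin] at this ⊢
    lia
  obtain ⟨b, hb⟩ := Fin.Embedding.exists_embedding_disjoint_range_of_add_le_Nat_card hcard
  exact ⟨b, b.injective, fun i j h => Set.disjoint_left.1 hb ⟨j, rfl⟩ ⟨i, h⟩⟩

theorem exists_injective_eq_of_le (t : Fin 3 → K5.V) :
    ∃ a : Fin 3 → K5.V, Function.Injective a ∧ ∀ n, ∃ m ≤ n, a m = t n := by
  have exists_pair : ∀ i j k : Fin 5, ∃ q r,
      i ≠ q ∧ i ≠ r ∧ q ≠ r ∧ (i = j ∨ q = j) ∧ (i = k ∨ q = k ∨ r = k) := by decide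
  obtain ⟨q, r, hq, hr, hqr, h1, h2⟩ := exists_pair (t 0) (t 1) (t 2)
  exact ⟨![t 0, q, r], injective_vecCons_three hq hr hqr,
    by simpa [Fin.forall_fin_succ, Fin.exists_fin_succ] using ⟨h1, h2⟩⟩

end K5

namespace SubdivisionData

variable (S : SubdivisionData K5 G)

theorem pairwise_disjoint_edgeSet {m n : ℕ} {b : Fin m → K5.V} {a : Fin n → K5.V}
    (hb : Function.Injective b) (ha : Function.Injective a) (hba : ∀ i j, b i ≠ a j)
    {g : Fin m → Fin n → K5.E} (hg : ∀ i j, K5.ends (g i j) = s(b i, a j)) :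
    Pairwise (Function.onFun Disjoint
      (Function.uncurry fun i j => (S.walk (g i j)).edgeSet)) := by
  rintro ⟨i, j⟩ ⟨i', j'⟩ hne
  refine S.disjoint_edgeSet fun h => hne ?_
  have hends : s(b i, a j) = s(b i', a j') := by rw [← hg, ← hg, h]
  rcases Sym2.eq_iff.1 hends with ⟨hi, hj⟩ | ⟨hi, -⟩
  · rw [hb hi, ha hj]
  · exact absurd hi (hba i j')

theorem immerses_K33_of_tripod {a : Fin 3 → K5.V} (ha : Function.Injective a) {x : G.V}
    (hx : x ∉ Set.range S.vmap) {X : Fin 3 → Set G.E}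
    (hX : Pairwise (Function.onFun Disjoint X)) (hXa : ∀ i, X i ⊆ S.edgesWithin (Set.range a))
    (hr : ∀ i, (G.restrict (X i)).Reachable x (S.vmap (a i))) : Immerses K33 G := by
  obtain ⟨b, hb, hba⟩ := K5.exists_injective_forall_ne a
  choose g hg using fun i j => K5.exists_edge (hba i j)
  refine immerses_K33_of_star (x := x) (b := S.vmap ∘ b) (c := S.vmap ∘ a)
    (X := X) (Y := fun i j => (S.walk (g i j)).edgeSet)
    (hb := S.inj.comp hb)
    (hc := S.inj.comp ha)
    (hxb := fun i h => hx ⟨_, h⟩)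
    (hxc := fun j h => hx ⟨_, h.symm⟩)
    (hbc := fun i j h => hba i j (S.inj h))
    (hX := hX)
    (hY := S.pairwise_disjoint_edgeSet hb ha hba hg)
    (hXY := ?_)
    (hxr := hr)
    (hbr := fun i j => S.reachable (hg i j))
  intro i j k
  refine Set.disjoint_left.2 fun e he heg => ?_
  obtain ⟨l, hl⟩ := hXa k he (g i j) heg (b i) (by simp [hg])
  exact hba i l hl.symm

theorem immerses_K33_of_adjacent {f g : K5.E} {i j k : K5.V} (hf : K5.ends f = s(i, j))
    (hg : K5.ends g = s(i, k)) (hjk : j ≠ k) {x w : G.V} (hx : x ∈ S.interior f)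
    (hw : w ∈ (S.walk g).support) (hxw : (G.restrict S.freeEdges).Reachable x w) :
    Immerses K33 G := by
  have hfg : f ≠ g := by
    rintro rfl
    exact hjk (Sym2.congr_right.1 (hf.symm.trans hg))
  obtain ⟨A, hA, hAf, hAr⟩ := S.exists_split (a := ![i, j]) hf hx.1
  obtain ⟨C, -, hCg, hCr⟩ := S.exists_split (a := ![i, k]) hg hw
  have hAlink (m : Fin 2) : Disjoint (A m) (S.freeEdges ∪ C 1) :=
    (Set.disjoint_union_left.2 ⟨S.disjoint_freeEdges_edgeSet f,
      (S.disjoint_edgeSet hfg.symm).mono_left (hCg 1)⟩).symm.mono_left (hAf m)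
  have within_range {h : K5.E} {l m : K5.V} (hh : K5.ends h = s(l, m))
      (hl : l ∈ Set.range ![i, j, k]) (hm : m ∈ Set.range ![i, j, k]) :
      (S.walk h).edgeSet ⊆ S.edgesWithin (Set.range ![i, j, k]) :=
    S.edgeSet_subset_edgesWithin (by simpa only [hh, Sym2.ball] using ⟨hl, hm⟩)
  have hAW (m : Fin 2) := (hAf m).trans (within_range hf ⟨0, rfl⟩ ⟨1, rfl⟩)
  have hCW := (hCg 1).trans (within_range hg ⟨0, rfl⟩ ⟨2, rfl⟩)
  refine S.immerses_K33_of_tripod (a := ![i, j, k]) (X := ![A 0, A 1, S.freeEdges ∪ C 1])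
    (injective_vecCons_three (K5.ne_of_ends_eq hf) (K5.ne_of_ends_eq hg) hjk)
    (S.notMem_range_of_mem_interior (K5.exists_ne_mem_ends f) hx) ?_ ?_ ?_
  · simp only [pairwise_vecCons, Fin.forall_fin_two, Fin.forall_fin_one]
    exact ⟨⟨hA zero_ne_one, hAlink 0⟩, hAlink 1, nofun, Subsingleton.pairwise⟩
  · simp only [Fin.forall_fin_succ, IsEmpty.forall_iff, and_true]
    exact ⟨hAW 0, hAW 1, Set.union_subset (S.freeEdges_subset_edgesWithin _) hCW⟩
  · simp only [Fin.forall_fin_succ, IsEmpty.forall_iff, and_true]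
    exact ⟨hAr 0, hAr 1, (hxw.mono (restrict_mono Set.subset_union_left)).trans
      ((hCr 1).mono (restrict_mono Set.subset_union_right))⟩

theorem immerses_K33_of_disjoint_ends {f g : K5.E} {a b : Fin 2 → K5.V}
    (hf : K5.ends f = s(a 0, a 1)) (hg : K5.ends g = s(b 0, b 1)) (hba : ∀ i j, b i ≠ a j)
    {x w : G.V} (hx : x ∈ S.interior f) (hw : w ∈ S.interior g)
    (hxw : (G.restrict S.freeEdges).Reachable x w) : Immerses K33 G := by
  have hx' := S.notMem_range_of_mem_interior (K5.exists_ne_mem_ends f) hx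
  have hw' := S.notMem_range_of_mem_interior (K5.exists_ne_mem_ends g) hw
  have hbf (i : Fin 2) : b i ∉ K5.ends f := by simp [hf, hba]
  have hag (j : Fin 2) : a j ∉ K5.ends g := by simp [hg, (hba _ j).symm]
  choose h hh using fun i j => K5.exists_edge (hba i j)
  have hfg : f ≠ g := fun e => hbf 0 (by simp [e, hg])
  have hfh (i j : Fin 2) : f ≠ h i j := fun e => hbf i (by simp [e, hh])
  have hgh (i j : Fin 2) : g ≠ h i j := fun e => hag j (by simp [e, hh])
  have hxw_ne : x ≠ w := by
    rintro rfl
    exact hfg (S.eq_of_mem_interior hx hw.1)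
  have ha := S.inj.comp (K5.injective_of_ends_eq hf)
  have hb := S.inj.comp (K5.injective_of_ends_eq hg)
  obtain ⟨A, hA, hAf, hAr⟩ := S.exists_split hf hx.1
  obtain ⟨B, hB, hBg, hBr⟩ := S.exists_split hg hw.1
  have hXf {g' : K5.E} (hfg' : f ≠ g') :
      ∀ k, Disjoint (Matrix.vecCons S.freeEdges A k) (S.walk g').edgeSet :=
    Fin.forall_fin_succ.2 ⟨S.disjoint_freeEdges_edgeSet g',
      fun i => (S.disjoint_edgeSet hfg').mono_left (hAf i)⟩
  exact immerses_K33_of_star (x := x) (b := S.vmap ∘ b) (c := Matrix.vecCons w (S.vmap ∘ a))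
    (X := Matrix.vecCons S.freeEdges A)
    (Y := fun i => Matrix.vecCons (B i) fun j => (S.walk (h i j)).edgeSet)
    (hb := hb)
    (hc := Fin.cons_injective_iff.2 ⟨fun ⟨i, hi⟩ => hw' ⟨_, hi⟩, ha⟩)
    (hxb := fun i h => hx' ⟨_, h⟩)
    (hxc := Fin.forall_fin_succ.2 ⟨hxw_ne, fun i h => hx' ⟨_, h.symm⟩⟩)
    (hbc := fun i => Fin.forall_fin_succ.2 ⟨fun h => hw' ⟨_, h⟩, fun j h => hba i j (S.inj h)⟩)
    (hX := pairwise_vecCons.2 ⟨fun i => (S.disjoint_freeEdges_edgeSet f).mono_right (hAf i), hA⟩)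
    (hY := pairwise_uncurry_vecCons hB
      (fun i i' j => (S.disjoint_edgeSet (hgh i' j)).mono_left (hBg i))
      (S.pairwise_disjoint_edgeSet hb.of_comp ha.of_comp hba hh))
    (hXY := fun i => Fin.forall_fin_succ.2
      ⟨fun k => (hXf hfg k).mono_right (hBg i), fun j k => hXf (hfh i j) k⟩)
    (hxr := Fin.forall_fin_succ.2 ⟨hxw, hAr⟩)
    (hbr := fun i => Fin.forall_fin_succ.2 ⟨(hBr i).symm, fun j => S.reachable (hh i j)⟩)

theorem immerses_K33_of_link {f g : K5.E} (hfg : f ≠ g) {x w : G.V} (hx : x ∈ S.interior f)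
    (hw : w ∈ (S.walk g).support) (hxw : (G.restrict S.freeEdges).Reachable x w) :
    Immerses K33 G := by
  by_cases hcommon : ∃ i ∈ K5.ends f, i ∈ K5.ends g
  · obtain ⟨i, ⟨j, hf⟩, k, hg⟩ := hcommon
    refine S.immerses_K33_of_adjacent hf hg ?_ hx hw hxw
    rintro rfl
    exact hfg (K5.ends_injective (hf.trans hg.symm))
  push Not at hcommon
  obtain ⟨a, hf⟩ := exists_ends_eq f
  obtain ⟨b, hg⟩ := exists_ends_eq g
  rcases S.mem_interior_or_eq_vmap hw with hwg | ⟨k, hk, rfl⟩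
  · refine S.immerses_K33_of_disjoint_ends hf hg ?_ hx hwg hxw
    have hba : ∀ m ∈ K5.ends f, ∀ n ∈ K5.ends g, n ≠ m :=
      fun m hm n hn h => hcommon m hm (h ▸ hn)
    simpa [hf, hg, Fin.forall_fin_two, and_comm, and_assoc, and_left_comm] using hba
  · have ne_of_mem {l : K5.V} (hl : l ∈ K5.ends f) : l ≠ k := fun h => hcommon l hl (h ▸ hk)
    obtain ⟨h, hh⟩ := K5.exists_edge (ne_of_mem (l := a 0) (by simp [hf]))
    exact S.immerses_K33_of_adjacent hf hh (ne_of_mem (by simp [hf])) hx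
      (S.vmap_mem_support (by simp [hh])) hxw

theorem immerses_K33_of_interior_nonempty (hG : G.EdgeConnGe 3) {f : K5.E}
    (hf : (S.interior f).Nonempty) : Immerses K33 G := by
  obtain ⟨x, hx, g, w, hwg, hwf, hxw⟩ := S.exists_reachable_notMem_interior hG hf
  by_cases hfg : f = g
  · subst hfg
    obtain ⟨i, -, rfl⟩ := (S.mem_interior_or_eq_vmap hwg).resolve_left hwf
    obtain ⟨h, hhf, hi⟩ := K5.exists_ne_mem_ends f i
    exact S.immerses_K33_of_link hhf.symm hx (S.vmap_mem_support hi) hxw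
  · exact S.immerses_K33_of_link hfg hx hwg hxw

theorem immerses_K33_of_free_tripod {x : G.V} (hx : x ∉ Set.range S.vmap) {X : Fin 3 → Set G.E}
    (hX : Pairwise (Function.onFun Disjoint X)) (hXfree : ∀ n, X n ⊆ S.freeEdges)
    {t : Fin 3 → K5.V} (hr : ∀ n, (G.restrict (X n)).Reachable x (S.vmap (t n))) :
    Immerses K33 G := by
  obtain ⟨a, ha, hat⟩ := K5.exists_injective_eq_of_le t
  let P (n : Fin 3) : Set G.E :=
    {e | ∃ m < n, ∃ f, K5.ends f = s(a m, a n) ∧ e ∈ (S.walk f).edgeSet}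
  have hXP (m n : Fin 3) : Disjoint (X m) (P n) := by
    refine Set.disjoint_left.2 fun e he hP => ?_
    obtain ⟨-, -, f, -, hef⟩ := hP
    exact hXfree m he f hef
  have hPP {m n : Fin 3} (hmn : m ≠ n) : Disjoint (P m) (P n) := by
    refine Set.disjoint_left.2 fun e ⟨k, hk, f, hf, hef⟩ ⟨l, hl, g, hg, heg⟩ => ?_
    obtain rfl : f = g := by_contra fun hfg => S.edgeDisj f g hfg hef heg
    rcases Sym2.eq_iff.1 (hf.symm.trans hg) with ⟨-, h⟩ | ⟨hkn, hml⟩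
    · exact hmn (ha h)
    · exact (hk.trans ((ha hml).trans_lt hl)).ne (ha hkn)
  refine S.immerses_K33_of_tripod ha hx (X := fun n => X n ∪ P n) (fun m n hmn => ?_)
    (fun n => Set.union_subset ?_ ?_) fun n => ?_
  · exact Set.disjoint_union_left.2 ⟨Set.disjoint_union_right.2 ⟨hX hmn, hXP m n⟩,
      Set.disjoint_union_right.2 ⟨(hXP n m).symm, hPP hmn⟩⟩
  · exact (hXfree n).trans (S.freeEdges_subset_edgesWithin _)
  · rintro e ⟨m, -, f, hf, hef⟩
    exact S.edgeSet_subset_edgesWithin (by simp [hf]) hef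
  · obtain ⟨m, hmn, hm⟩ := hat n
    have hxm := (hm ▸ hr n).mono (restrict_mono (Set.subset_union_left (t := P n)))
    rcases hmn.eq_or_lt with rfl | hlt
    · exact hxm
    obtain ⟨f, hf⟩ := K5.exists_edge (ha.ne hlt.ne)
    have hfP : (S.walk f).edgeSet ⊆ X n ∪ P n :=
      fun e he => Or.inr ⟨m, hlt, f, hf, he⟩
    exact hxm.trans ((S.reachable hf).mono (restrict_mono hfP))

theorem immerses_K33_of_interior_empty (hG : G.EdgeConnGe 3) (hn : 6 ≤ Fintype.card G.V)
    (hS : ∀ f, S.interior f = ∅) : Immerses K33 G := by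
  have mem_range {f : K5.E} {y : G.V} (hy : y ∈ (S.walk f).support) :
      y ∈ Set.range S.vmap := by
    obtain ⟨i, -, rfl⟩ := (S.mem_interior_or_eq_vmap hy).resolve_left (by simp [hS])
    exact ⟨i, rfl⟩
  obtain ⟨x₀, hx₀⟩ : ∃ x₀, x₀ ∉ Set.range S.vmap := by
    by_contra! hsurj
    have hcard : Fintype.card G.V ≤ Fintype.card (Fin 5) :=
      Fintype.card_le_of_surjective (α := Fin 5) S.vmap hsurj
    rw [Fintype.card_fin] at hcard
    lia
  obtain ⟨x, hx, X, hX, hXends, hXr⟩ := hG.exists_tripod ⟨_, Set.mem_range_self (0 : Fin 5)⟩ hx₀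
  have hXfree (n : Fin 3) : X n ⊆ S.freeEdges := by
    intro e he f hef
    obtain ⟨y, hy, hyB⟩ := hXends n e he
    exact hyB (mem_range (Walk.mem_support_of_mem_edges hef hy))
  have exists_vmap (n : Fin 3) : ∃ i, (G.restrict (X n)).Reachable x (S.vmap i) := by
    obtain ⟨_, ⟨i, rfl⟩, hr⟩ := hXr n
    exact ⟨i, hr⟩
  choose t ht using exists_vmap
  exact S.immerses_K33_of_free_tripod hx hX hXfree ht

theorem immerses_K33 (S : SubdivisionData K5 G) (hG : G.EdgeConnGe 3)
    (hn : 6 ≤ Fintype.card G.V) : Immerses K33 G := by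
  by_cases hS : ∃ f, (S.interior f).Nonempty
  · obtain ⟨f, hf⟩ := hS
    exact S.immerses_K33_of_interior_nonempty hG hf
  · exact S.immerses_K33_of_interior_empty hG hn (by simpa [Set.not_nonempty_iff_eq_empty] using hS)

end SubdivisionData

end Multigraph

open Multigraph in
/-- If `G` is a 3-edge-connected non-planar graph with at least 6 vertices,
then `G` contains an immersion of `K_{3,3}`. -/
theorem k33_immersion_of_nonplanar (G : Multigraph)
    (h3ec : G.EdgeConnGe 3) (hnp : ¬ G.Planar) (hn : 6 ≤ Fintype.card G.V) :
    Immerses K33 G := by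
  by_cases h33 : ContainsSubdivision K33 G
  · exact h33.map SubdivisionData.toImmersionData
  · obtain ⟨S⟩ : ContainsSubdivision K5 G := by_contra fun h5 => hnp ⟨h5, h33⟩
    exact S.immerses_K33 h3ec hn
end

section
/- If a graph G contains K_5 as a subgraph on vertex set S and contains a vertex v ∉ S with three pairwise edge-disjoint paths from v to S (internally disjoint from S in their interiors appropriately, i.e., paths ending at first hit of S), then G contains an immersion of K_{3,3}. -/
/-!
An immersion only needs edge-disjoint walks, since every walk contains a path with the same ends.
Let `S` be a clique and cut each of the `n` walks from `v` at its first vertex in `S`, so that they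
use no edge inside `S`. Choose `n` distinct vertices of `S`, assigned to the walks injectively,
including every vertex where a walk ends and assigning each such vertex to a walk that ends there.
A walk that ends elsewhere is rerouted by the clique edge from its end to its assigned vertex. Then
`v` together with `m` further vertices of `S` on one side, and the `n` assigned vertices on the
other, are the branch vertices of a `K_{m+1,n}`: the rerouting edges stay among the assigned
vertices, hence avoid the clique edges towards the `m` further vertices. Finally, `K_{3,3}` is the
case `m = 2`, `n = 3`.
-/

theorem exists_injective_eq_of_mem_range {ι α : Type*} [Fintype ι]
    {S : Finset α} {t : ι → α} (ht : ∀ i, t i ∈ S) (hcard : Fintype.card ι ≤ S.card) :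
    ∃ x : ι → α, Function.Injective x ∧ (∀ i, x i ∈ S) ∧ Set.range t ⊆ Set.range x ∧
      ∀ i, x i ∈ Set.range t → x i = t i := by
  classical
  obtain ⟨R, -, hR⟩ := Set.exists_subset_bijOn Set.univ t
  rw [Set.image_univ] at hR
  obtain ⟨T, htT, hTS, hT⟩ := Finset.exists_subsuperset_card_eq
    (Finset.image_subset_iff.2 fun i (_ : i ∈ Finset.univ) => ht i)
    Finset.card_image_le hcard
  have hmem : ∀ i, t i ∈ T := fun i => htT (Finset.mem_image_of_mem t (Finset.mem_univ i))
  obtain ⟨x, hx⟩ := Set.MapsTo.exists_equiv_extend_of_card_eq hT.symm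
    (fun i (_ : i ∈ R) => hmem i) hR.injOn
  refine ⟨fun i => x i, Subtype.val_injective.comp x.injective, fun i => hTS (x i).2, ?_, ?_⟩
  · rintro _ ⟨i, rfl⟩
    exact ⟨x.symm ⟨t i, hmem i⟩, by simp only [Equiv.apply_symm_apply]⟩
  · intro i hi
    obtain ⟨k, hk, hki⟩ := hR.surjOn hi
    obtain rfl : k = i := x.injective (Subtype.ext ((hx k hk).trans hki))
    exact hx k hk

namespace Multigraph

section Walk

variable {G : Multigraph} {u v w : G.V}

/-- The walk `p` followed by one further edge `e`. -/
def Walk.concat {u v w : G.V} : G.Walk u v → (e : G.E) → G.ends e = s(v, w) → G.Walk u w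
  | .nil _, e, h => .cons e h (.nil w)
  | .cons e' h' p, e, h => .cons e' h' (p.concat e h)

theorem Walk.edges_concat (p : G.Walk u v) (e : G.E) (h : G.ends e = s(v, w)) :
    (p.concat e h).edges = p.edges ++ [e] := by
  induction p with
  | nil => rfl
  | cons e' _ p ih => exact congrArg (e' :: ·) (ih h)

theorem Walk.exists_isSuffix_of_mem_support (p : G.Walk u v) (hw : w ∈ p.support) :
    ∃ q : G.Walk w v, q.support <:+ p.support ∧ q.edges <:+ p.edges := by
  induction p with
  | nil x =>
    obtain rfl : w = x := List.mem_singleton.1 hw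
    exact ⟨.nil w, List.suffix_rfl, List.suffix_rfl⟩
  | cons e h p ih =>
    rcases List.mem_cons.1 hw with rfl | hw
    · exact ⟨.cons e h p, List.suffix_rfl, List.suffix_rfl⟩
    · obtain ⟨q, hsupport, hedges⟩ := ih hw
      exact ⟨q, hsupport.trans (List.suffix_cons _ _), hedges.trans (List.suffix_cons _ _)⟩

theorem Walk.exists_isPath_edges_subset (p : G.Walk u v) :
    ∃ q : G.Walk u v, q.IsPath ∧ q.edges ⊆ p.edges := by
  induction p with
  | nil u => exact ⟨.nil u, List.nodup_singleton u, List.Subset.refl _⟩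
  | @cons u _ _ e h p ih =>
    obtain ⟨q, hq, hqp⟩ := ih
    by_cases hu : u ∈ q.support
    · obtain ⟨r, hsupport, hedges⟩ := q.exists_isSuffix_of_mem_support hu
      exact ⟨r, hq.sublist hsupport.sublist,
        List.subset_cons_of_subset e (List.Subset.trans hedges.subset hqp)⟩
    · exact ⟨.cons e h q, List.nodup_cons.2 ⟨hu, hq⟩, List.cons_subset_cons e hqp⟩

theorem Walk.exists_walk_to_first_mem (p : G.Walk u v) {S : Set G.V} (hv : v ∈ S) :
    ∃ x ∈ S, ∃ q : G.Walk u x,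
      q.edges ⊆ p.edges ∧ ∀ e ∈ q.edges, ∃ y ∈ G.ends e, y ∉ S := by
  induction p with
  | nil u => exact ⟨u, hv, .nil u, List.Subset.refl _, by simp [Walk.edges]⟩
  | @cons u _ _ e h p ih =>
    by_cases hu : u ∈ S
    · exact ⟨u, hu, .nil u, List.nil_subset _, by simp [Walk.edges]⟩
    · obtain ⟨x, hx, q, hqp, hq⟩ := ih hv
      refine ⟨x, hx, .cons e h q, List.cons_subset_cons e hqp, List.forall_mem_cons.2 ⟨?_, hq⟩⟩
      exact ⟨u, by simp [h], hu⟩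

end Walk

section Immersion

theorem immerses_of_walks {H G : Multigraph} {φ : H.V → G.V} (hφ : Function.Injective φ)
    {a b : H.E → G.V} (hab : ∀ e, s(a e, b e) = (H.ends e).map φ)
    (W : ∀ e, G.Walk (a e) (b e))
    (hW : Pairwise fun e e' => List.Disjoint (W e).edges (W e').edges) : Immerses H G := by
  choose Q hQ hQW using fun e => (W e).exists_isPath_edges_subset
  exact ⟨⟨φ, hφ, a, b, Q, hab, hQ, fun e e' hne => List.disjoint_of_subset_left (hQW e)
    (List.disjoint_of_subset_right (hQW e') (hW hne))⟩⟩

/-- The complete bipartite graph `K_{m,n}`, with the encoding of `K33`, which is the case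
`m = n = 3` by definition. -/
def completeBipartite (m n : ℕ) : Multigraph where
  V := Fin m ⊕ Fin n
  E := Fin m × Fin n
  ends e := s(Sum.inl e.1, Sum.inr e.2)
  noLoop e := by simp [Sym2.mk_isDiag_iff]

variable {G : Multigraph}

/-- Two vertices are adjacent if at least one edge joins them. -/
def Adj (G : Multigraph) (u v : G.V) : Prop := ∃ e, G.ends e = s(u, v)

theorem immerses_completeBipartite_of_walks {m n : ℕ} {v : G.V} {w : Fin m → G.V}
    {x : Fin n → G.V} (hinj : Function.Injective (Sum.elim (Fin.cons v w : Fin (m + 1) → G.V) x))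
    (hadj : ∀ k j, G.Adj (w k) (x j)) (Q : ∀ j, G.Walk v (x j))
    (hQ : Pairwise fun i j => List.Disjoint (Q i).edges (Q j).edges)
    (hQwx : ∀ i, ∀ e ∈ (Q i).edges, ∀ k j, G.ends e ≠ s(w k, x j)) :
    Immerses (completeBipartite (m + 1) n) G := by
  choose d hd using hadj
  have hd_inj : ∀ k j k' j', d k j = d k' j' → k = k' ∧ j = j' := by
    intro k j k' j' h
    have hends : s(w k, x j) = s(w k', x j') := by rw [← hd, ← hd, h]
    have hw : Function.Injective w :=
      (Fin.cons_injective_iff.1 (hinj.comp Sum.inl_injective)).2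
    have hx : Function.Injective x := hinj.comp Sum.inr_injective
    rcases Sym2.eq_iff.1 hends with ⟨hk, hj⟩ | ⟨hkj, -⟩
    · exact ⟨hw hk, hx hj⟩
    · exact absurd (@hinj (.inl k.succ) (.inr j') hkj) Sum.inl_ne_inr
  let W : ∀ e : Fin (m + 1) × Fin n,
      G.Walk ((Fin.cons v w : Fin (m + 1) → G.V) e.1) (x e.2) := fun e =>
    Fin.cases (motive := fun i => G.Walk ((Fin.cons v w : Fin (m + 1) → G.V) i) (x e.2))
      (Q e.2) (fun k => .cons (d k e.2) (hd k e.2) (.nil _)) e.1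
  have hW_succ : ∀ {k j e}, e ∈ (W (Fin.succ k, j)).edges → e = d k j := List.mem_singleton.1
  refine immerses_of_walks hinj (fun _ => rfl) W ?_
  rintro ⟨i, j⟩ ⟨i', j'⟩ hne e he he'
  cases i using Fin.cases with
  | zero =>
    cases i' using Fin.cases with
    | zero => exact hQ (fun h => hne (congrArg (Prod.mk 0) h)) he he'
    | succ k' => exact hQwx j e he k' j' (hW_succ he' ▸ hd k' j')
  | succ k =>
    cases i' using Fin.cases with
    | zero => exact hQwx j' e he' k j (hW_succ he ▸ hd k j)
    | succ k' =>
      obtain ⟨rfl, rfl⟩ := hd_inj k j k' j' ((hW_succ he).symm.trans (hW_succ he'))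
      exact hne rfl

end Immersion

section Clique

variable {G : Multigraph} {v : G.V}

/-- A set of vertices is a clique if its distinct vertices are pairwise adjacent, i.e. if it is the
vertex set of a complete subgraph. -/
def IsClique (G : Multigraph) (S : Set G.V) : Prop := S.Pairwise G.Adj

theorem isClique_range {ι : Type*} [LinearOrder ι] {f : ι → G.V}
    (g : {p : ι × ι // p.1 < p.2} → G.E) (hg : ∀ p, G.ends (g p) = s(f p.1.1, f p.1.2)) :
    G.IsClique (Set.range f) := by
  rintro _ ⟨i, rfl⟩ _ ⟨j, rfl⟩ hne
  rcases lt_or_gt_of_ne (ne_of_apply_ne f hne) with h | h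
  · exact ⟨g ⟨(i, j), h⟩, hg _⟩
  · exact ⟨g ⟨(j, i), h⟩, (hg _).trans Sym2.eq_swap⟩

theorem IsClique.exists_walk_extending {S : Set G.V} (hS : G.IsClique S) {t x : G.V}
    (ht : t ∈ S) (hx : x ∈ S) (p : G.Walk v t) :
    ∃ q : G.Walk v x, ∀ e ∈ q.edges, e ∈ p.edges ∨ t ≠ x ∧ G.ends e = s(t, x) := by
  by_cases h : t = x
  · subst h
    exact ⟨p, fun e he => .inl he⟩
  · obtain ⟨d, hd⟩ := hS ht hx h
    refine ⟨p.concat d hd, fun e he => ?_⟩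
    rw [Walk.edges_concat, List.mem_append, List.mem_singleton] at he
    exact he.imp_right fun (hed : e = d) => ⟨h, hed ▸ hd⟩

theorem IsClique.exists_walks_to_distinct {ι : Type*} [Fintype ι] {S : Finset G.V}
    (hS : G.IsClique S) (hcard : Fintype.card ι ≤ S.card) {t : ι → G.V} (ht : ∀ i, t i ∈ S)
    (P : ∀ i, G.Walk v (t i))
    (hP : Pairwise fun i j => List.Disjoint (P i).edges (P j).edges) :
    ∃ (x : ι → G.V) (Q : ∀ i, G.Walk v (x i)), Function.Injective x ∧ (∀ i, x i ∈ S) ∧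
      (Pairwise fun i j => List.Disjoint (Q i).edges (Q j).edges) ∧
      ∀ i, ∀ e ∈ (Q i).edges, ∀ y ∈ S, y ∉ Set.range x → ∀ j, G.ends e ≠ s(y, x j) := by
  choose t' ht' P' hP'P hP'S using fun i => (P i).exists_walk_to_first_mem (S := S) (ht i)
  obtain ⟨x, hx, hxS, htx, hxt⟩ := exists_injective_eq_of_mem_range ht' hcard
  choose Q hQ using fun i => hS.exists_walk_extending (ht' i) (hxS i) (P' i)
  have hP'_outside : ∀ i, ∀ e ∈ (P' i).edges, ∀ a ∈ S, ∀ b ∈ S, G.ends e ≠ s(a, b) := by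
    intro i e he a ha b hb hab
    obtain ⟨y, hy, hyS⟩ := hP'S i e he
    rcases Sym2.mem_iff.1 (hab ▸ hy) with rfl | rfl <;> exact hyS ‹_›
  refine ⟨x, Q, hx, hxS, fun i j hij e hi hj => ?_, fun i e he y hy hyx j hej => ?_⟩
  · rcases hQ i e hi with hi | ⟨hti, hi⟩ <;> rcases hQ j e hj with hj | ⟨-, hj⟩
    · exact hP hij (hP'P i hi) (hP'P j hj)
    · exact hP'_outside i e hi _ (ht' j) _ (hxS j) hj
    · exact hP'_outside j e hj _ (ht' i) _ (hxS i) hi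
    · rcases Sym2.eq_iff.1 (hi.symm.trans hj) with ⟨-, h⟩ | ⟨-, h⟩
      · exact hij (hx h)
      · exact hti (hxt i ⟨j, h.symm⟩).symm
  · rcases hQ i e he with he | ⟨-, he⟩
    · exact hP'_outside i e he _ hy _ (hxS j) hej
    · rcases Sym2.eq_iff.1 (hej.symm.trans he) with ⟨h, -⟩ | ⟨h, -⟩
      · exact hyx (htx ⟨i, h.symm⟩)
      · exact hyx ⟨i, h.symm⟩

end Clique

end Multigraph

open Multigraph in
theorem k33_of_K5_subgraph_plus_paths_general {G : Multigraph} {m n : ℕ} {S : Finset G.V}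
    (hS : G.IsClique S) (hcard : m + n ≤ S.card) {v : G.V} (hv : v ∉ S) {t : Fin n → G.V}
    (ht : ∀ i, t i ∈ S) (P : ∀ i, G.Walk v (t i))
    (hP : Pairwise fun i j => List.Disjoint (P i).edges (P j).edges) :
    Immerses (completeBipartite (m + 1) n) G := by
  obtain ⟨x, Q, hx, hxS, hQ, hQx⟩ := hS.exists_walks_to_distinct
    (by rw [Fintype.card_fin]; lia) ht P hP
  have hrest : Fintype.card (Fin m) ≤ (S \ Finset.univ.image x).card := by
    have hsdiff := Finset.le_card_sdiff (Finset.univ.image x) S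
    rw [Finset.card_image_of_injective _ hx, Finset.card_fin] at hsdiff
    rw [Fintype.card_fin]
    lia
  obtain ⟨w, hw⟩ := Function.Embedding.exists_of_card_le_finset hrest
  have hwS : ∀ k, w k ∈ S := fun k => (Finset.mem_sdiff.1 (hw ⟨k, rfl⟩)).1
  have hwx : ∀ k, w k ∉ Set.range x := fun k => by
    simpa using (Finset.mem_sdiff.1 (hw ⟨k, rfl⟩)).2
  refine immerses_completeBipartite_of_walks (w := w) ?_
    (fun k j => hS (hwS k) (hxS j) fun h => hwx k ⟨j, h.symm⟩) Q hQ
    (fun i e he k j => hQx i e he (w k) (hwS k) (hwx k) j)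
  refine (Fin.cons_injective_iff.2 ⟨?_, w.injective⟩).sumElim hx fun i j => ?_
  · rintro ⟨k, rfl⟩
    exact hv (hwS k)
  · cases i using Fin.cases with
    | zero => exact fun h : v = x j => hv (h ▸ hxS j)
    | succ k => exact fun h => hwx k ⟨j, h.symm⟩

open Multigraph in
/-- If `G` contains `K_5` as a subgraph on the images of `f : Fin 5 ↪ V(G)`
(with distinct edges `g i j` joining `f i` and `f j`), and contains a vertex
`v` outside this set with three pairwise edge-disjoint paths from `v` to the
set, each path meeting the set only in its final vertex, then `G` contains an
immersion of `K_{3,3}`. -/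
theorem k33_of_K5_subgraph_plus_paths (G : Multigraph)
    (f : Fin 5 ↪ G.V)
    (g : {p : Fin 5 × Fin 5 // p.1 < p.2} → G.E) (hg : Function.Injective g)
    (hgends : ∀ p, G.ends (g p) = s(f p.1.1, f p.1.2))
    (v : G.V) (hv : ∀ i, v ≠ f i)
    (t : Fin 3 → Fin 5)
    (P : ∀ i : Fin 3, G.Walk v (f (t i)))
    (hP : ∀ i, (P i).IsPath)
    (hPdisj : ∀ i j, i ≠ j → List.Disjoint (P i).edges (P j).edges)
    (hfirst : ∀ i, ∀ x ∈ (P i).support, (∃ j, x = f j) → x = f (t i)) :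
    Immerses K33 G := by
  have hclique : G.IsClique (Finset.univ.map f : Finset G.V) := by
    simpa using isClique_range g hgends
  exact k33_of_K5_subgraph_plus_paths_general (m := 2) hclique (by simp)
    (by simpa [eq_comm] using hv) (by simp) P hPdisj
end
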